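/- Let G = (V, E) be a connected graph, t and c positive integers, and x a vertex of G. Then the number of simple (t, c)-cuts (V', V∖V') with x ∈ V' is at most t^c. -/

import Mathlib

open SimpleGraph

/-- The cut-set of a vertex set `A`: edges of `G` with one endpoint in `A` and one outside. -/
def ecut {V : Type*} (G : SimpleGraph V) (A : Set V) : Set (Sym2 V) :=
  {e | e ∈ G.edgeSet ∧ ∃ u v, e = s(u, v) ∧ u ∈ A ∧ v ∉ A}

/-- Edges all of whose endpoints lie in `A`. -/
def edgesWithin {V : Type*} (A : Set V) : Set (Sym2 V) :=
  {e | ∀ x ∈ e, x ∈ A}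

/-- The set of endpoints of a set of edges. -/
def endpts {V : Type*} (F : Set (Sym2 V)) : Set V :=
  {x | ∃ e ∈ F, x ∈ e}

/-- `F` intercepts the cut `(A, Aᶜ)`: no connected component of `G` with the edges of `F`
removed contains all edges of the cut-set of `A`. -/
def Intercepts {V : Type*} (G : SimpleGraph V) (F : Set (Sym2 V)) (A : Set V) : Prop :=
  ¬ ∃ u : V, ∀ e ∈ ecut G A,
    e ∈ (G.deleteEdges F).edgeSet ∧ ∀ x ∈ e, (G.deleteEdges F).Reachable u x

/-- A cut `(A, Aᶜ)` is atomic if both sides induce connected subgraphs. -/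
def AtomicCut {V : Type*} (G : SimpleGraph V) (A : Set V) : Prop :=
  (G.induce A).Connected ∧ (G.induce Aᶜ).Connected

/-- Two cuts are parallel if one side of the first is contained in one side of the second. -/
def ParallelCuts {V : Type*} (A B : Set V) : Prop :=
  A ⊆ B ∨ A ⊆ Bᶜ ∨ Aᶜ ⊆ B ∨ Aᶜ ⊆ Bᶜ

/-- A partition of the vertex set into nonempty clusters. -/
def IsVertexPartition {V : Type*} (Pa : Set (Set V)) : Prop :=
  (∀ P ∈ Pa, P.Nonempty) ∧ ∀ x : V, ∃! P, P ∈ Pa ∧ x ∈ P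

/-- The intercluster edges of a vertex partition. -/
def interEdges {V : Type*} (G : SimpleGraph V) (Pa : Set (Set V)) : Set (Sym2 V) :=
  {e | e ∈ G.edgeSet ∧ ∃ u v, e = s(u, v) ∧ ∀ P ∈ Pa, ¬(u ∈ P ∧ v ∈ P)}

/-- `W` is the vertex set of a connected component of `G`. -/
def IsComponentSet {V : Type*} (G : SimpleGraph V) (W : Set V) : Prop :=
  ∃ v : V, W = {u | G.Reachable u v}

/-- `E'` is an `IA_H(T, t, q, d, c)` set: it is the set of intercluster edges of a vertex
partition with connected parts, and within each connected component `W` of `H`, for every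
nonempty `T' ⊆ T ∩ W` admitting a `(T', T∖T', t, d)`-cut of size `α ≤ d`, there is a
`(T', T∖T', q, α)`-cut whose cut-set has at most `max (α - c) 0` edges inside any single part. -/
def IsIASet {V : Type*} (H : SimpleGraph V) (T : Set V) (t q d c : ℕ)
    (E' : Set (Sym2 V)) : Prop :=
  ∃ Pa : Set (Set V), IsVertexPartition Pa ∧ (∀ P ∈ Pa, (H.induce P).Connected) ∧
    E' = interEdges H Pa ∧
    ∀ W : Set V, IsComponentSet H W →
      ∀ T' : Set V, T' ⊆ T ∩ W → T'.Nonempty → ∀ α : ℕ, α ≤ d →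
        (∃ A : Set V, A ⊆ W ∧ A.ncard ≤ t ∧ A ∩ T = T' ∧ (ecut H A).ncard = α) →
        ∃ B : Set V, B ⊆ W ∧ B.ncard ≤ q ∧ B ∩ T = T' ∧ (ecut H B).ncard ≤ α ∧
          ∀ P ∈ Pa, (ecut H B ∩ edgesWithin P).ncard ≤ α - c

/-! Grow a search tree from `x` until it has `t + 1` vertices or spans the component of `x`. A
simple cut `A` with `x ∈ A` and at most `t` vertices either is that whole component or misses a
vertex of the tree, so that some tree edge `e` crosses `A`. In the second case `A` is still a simple
cut of the graph with `e` deleted, with one boundary edge fewer. Hence each of the `c` boundary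
edges is one of at most `t` tree edges; when the component itself is among the cuts, its spanning
tree has at most `t - 1` edges, which pays for this extra case. -/

theorem encard_biUnion_le_mul {ι α : Type*} {T : Set ι} {f : ι → Set α} {n : ℕ∞}
    (hT : T.Finite) (hf : ∀ i ∈ T, (f i).encard ≤ n) :
    (⋃ i ∈ T, f i).encard ≤ T.encard * n := by
  lift T to Finset ι using hT
  calc (⋃ i ∈ T, f i).encard ≤ ∑ i ∈ T, (f i).encard := T.set_encard_biUnion_le f
    _ ≤ T.card • n := T.sum_le_card_nsmul _ n hf
    _ = (T : Set ι).encard * n := by rw [nsmul_eq_mul, Set.encard_coe_eq_coe_finsetCard]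

section CutSet

variable {V : Type*} {G : SimpleGraph V} {A S : Set V} {F : Set (Sym2 V)}

theorem mk_mem_ecut {u v : V} (h : G.Adj u v) (hu : u ∈ A) (hv : v ∉ A) : s(u, v) ∈ ecut G A :=
  ⟨h, u, v, rfl, hu, hv⟩

theorem mk_notMem_ecut {u v : V} (hu : u ∈ A) (hv : v ∈ A) : s(u, v) ∉ ecut G A := by
  rintro ⟨-, a, b, hab, -, hb⟩
  have hb' : b ∈ s(u, v) := hab ▸ Sym2.mem_mk_right a b
  rcases Sym2.mem_iff.mp hb' with rfl | rfl
  exacts [hb hu, hb hv]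

theorem ecut_deleteEdges (G : SimpleGraph V) (A : Set V) (F : Set (Sym2 V)) :
    ecut (G.deleteEdges F) A = ecut G A \ F := by
  ext e
  simp only [ecut, edgeSet_deleteEdges, Set.mem_ofPred_eq, Set.mem_sdiff]
  tauto

theorem induce_deleteEdges_of_subset_ecut (hF : F ⊆ ecut G A) :
    (G.deleteEdges F).induce A = G.induce A := by
  ext u v
  simp only [comap_adj, Function.Embedding.subtype_apply, deleteEdges_adj, and_iff_left_iff_imp]
  exact fun _ h ↦ mk_notMem_ecut u.2 v.2 (hF h)

theorem subset_of_ecut_eq_empty (hA : (G.induce A).Preconnected) (hS : ecut G S = ∅)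
    (hAS : (A ∩ S).Nonempty) : A ⊆ S := by
  obtain ⟨x, hxA, hxS⟩ := hAS
  intro y hyA
  by_contra hyS
  obtain ⟨walk⟩ := hA ⟨x, hxA⟩ ⟨y, hyA⟩
  obtain ⟨d, -, hfst, hsnd⟩ := walk.exists_boundary_dart (Subtype.val ⁻¹' S) hxS hyS
  exact Set.eq_empty_iff_forall_notMem.mp hS _ (mk_mem_ecut d.adj hfst hsnd)

end CutSet

/-- `IsSearchTree G x S T` says that some run of a graph search in `G` from `x`, stopped at any
time, has visited the vertices `S` through the tree edges `T`. The order of the search is left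
open. -/
inductive IsSearchTree {V : Type*} (G : SimpleGraph V) (x : V) : Set V → Set (Sym2 V) → Prop
  | root : IsSearchTree G x {x} ∅
  | grow {S : Set V} {T : Set (Sym2 V)} {u v : V} (tree : IsSearchTree G x S T)
      (hu : u ∈ S) (hv : v ∉ S) (adj : G.Adj u v) :
      IsSearchTree G x (insert v S) (insert s(u, v) T)

namespace IsSearchTree

variable {V : Type*} {G : SimpleGraph V} {x : V} {A S : Set V} {T : Set (Sym2 V)}

theorem root_mem (h : IsSearchTree G x S T) : x ∈ S := by
  induction h with
  | root => exact Set.mem_singleton x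
  | grow _ _ _ _ ih => exact Set.mem_insert_of_mem _ ih

theorem encard_edges_add_one_le (h : IsSearchTree G x S T) : T.encard + 1 ≤ S.encard := by
  induction h with
  | root => simp
  | @grow S T u v _ _ hv _ ih =>
    rw [Set.encard_insert_of_notMem hv]
    gcongr
    exact (Set.encard_insert_le T s(u, v)).trans ih

theorem exists_mem_ecut (h : IsSearchTree G x S T) (hx : x ∈ A) (hSA : ¬S ⊆ A) :
    ∃ e ∈ T, e ∈ ecut G A := by
  induction h with
  | root => exact absurd (Set.singleton_subset_iff.mpr hx) hSA
  | @grow S T u v _ hu _ adj ih =>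
    by_cases hS : S ⊆ A
    · have hv : v ∉ A := fun hv ↦ hSA (Set.insert_subset hv hS)
      exact ⟨s(u, v), Set.mem_insert _ _, mk_mem_ecut adj (hS hu) hv⟩
    · obtain ⟨e, heT, he⟩ := ih hS
      exact ⟨e, Set.mem_insert_of_mem _ heT, he⟩

end IsSearchTree

theorem exists_isSearchTree {V : Type*} (G : SimpleGraph V) (x : V) (n : ℕ) :
    ∃ S T, IsSearchTree G x S T ∧ S.encard ≤ n + 1 ∧ (ecut G S = ∅ ∨ S.encard = n + 1) := by
  induction n with
  | zero => exact ⟨{x}, ∅, .root, by simp, by simp⟩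
  | succ n ih =>
    obtain ⟨S, T, tree, hle, hS⟩ := ih
    rcases (ecut G S).eq_empty_or_nonempty with hempty | hne
    · exact ⟨S, T, tree, hle.trans (by simp), .inl hempty⟩
    · have hcard : S.encard = n + 1 := hS.resolve_left hne.ne_empty
      obtain ⟨_, adj, u, v, rfl, hu, hv⟩ := hne
      have hcard' : (insert v S).encard = ↑(n + 1) + 1 := by
        rw [Set.encard_insert_of_notMem hv, hcard, Nat.cast_succ]
      exact ⟨_, _, tree.grow hu hv adj, hcard'.le, .inr hcard'⟩

section Counting

/-- The simple `(t, c)`-cuts `(A, Aᶜ)` of `G` with `x ∈ A`, each represented by its side `A`.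
Sizes are measured by `Set.encard`, which forces `A` and its cut-set to be finite even in an
infinite graph. -/
def simpleCuts {V : Type*} (G : SimpleGraph V) (x : V) (t c : ℕ) : Set (Set V) :=
  {A | x ∈ A ∧ (G.induce A).Connected ∧ A.encard ≤ t ∧ (ecut G A).encard ≤ c}

variable {V : Type*} {G : SimpleGraph V} {x : V} {t c : ℕ} {A : Set V}

theorem mem_simpleCuts_deleteEdges_singleton {e : Sym2 V} (hA : A ∈ simpleCuts G x t (c + 1))
    (he : e ∈ ecut G A) : A ∈ simpleCuts (G.deleteEdges {e}) x t c := by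
  obtain ⟨hx, hconn, ht, hc⟩ := hA
  refine ⟨hx, ?_, ht, ?_⟩
  · rwa [induce_deleteEdges_of_subset_ecut (Set.singleton_subset_iff.mpr he)]
  · rw [ecut_deleteEdges]
    rw [← Set.encard_sdiff_singleton_add_one he, Nat.cast_succ] at hc
    exact (ENat.add_le_add_iff_right ENat.one_ne_top).mp hc

theorem exists_eq_or_exists_mem_ecut (G : SimpleGraph V) (x : V) (t : ℕ) :
    ∃ (S : Set V) (T : Set (Sym2 V)), T.encard ≤ t ∧ T.encard + 1 ≤ S.encard ∧
      ∀ A : Set V, x ∈ A → (G.induce A).Preconnected → A.encard ≤ t →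
        A = S ∨ ∃ e ∈ T, e ∈ ecut G A := by
  obtain ⟨S, T, tree, hle, hS⟩ := exists_isSearchTree G x t
  have hTS := tree.encard_edges_add_one_le
  refine ⟨S, T, (ENat.add_le_add_iff_right ENat.one_ne_top).mp (hTS.trans hle), hTS, ?_⟩
  intro A hx hconn hAt
  rw [or_iff_not_imp_right]
  intro hcross
  have hSA : S ⊆ A := by
    by_contra hSA
    exact hcross (tree.exists_mem_ecut hx hSA)
  have hSt : S.encard < t + 1 :=
    ((Set.encard_le_encard hSA).trans hAt).trans_lt (by exact_mod_cast t.lt_succ_self)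
  have hAS : A ⊆ S :=
    subset_of_ecut_eq_empty hconn (hS.resolve_right hSt.ne) ⟨x, hx, tree.root_mem⟩
  exact hAS.antisymm hSA

theorem encard_simpleCuts_zero_le (G : SimpleGraph V) (x : V) (t : ℕ) :
    (simpleCuts G x t 0).encard ≤ 1 := by
  rw [Set.encard_le_one_iff]
  have hsub : ∀ A ∈ simpleCuts G x t 0, ∀ B ∈ simpleCuts G x t 0, A ⊆ B := by
    rintro A ⟨hxA, hA, -, -⟩ B ⟨hxB, -, -, hB⟩
    exact subset_of_ecut_eq_empty hA.preconnected (by simpa using hB) ⟨x, hxA, hxB⟩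
  exact fun A B hA hB ↦ (hsub A hA B hB).antisymm (hsub B hB A hA)

theorem encard_simpleCuts_succ_le
    (hrec : ∀ e, (simpleCuts (G.deleteEdges {e}) x t c).encard ≤ t ^ c) :
    (simpleCuts G x t (c + 1)).encard ≤ t ^ (c + 1) := by
  obtain ⟨S, T, hTt, hTS, hdich⟩ := exists_eq_or_exists_mem_ecut G x t
  set R := ⋃ e ∈ T, simpleCuts (G.deleteEdges {e}) x t c
  have hR : R.encard ≤ T.encard * t ^ c :=
    encard_biUnion_le_mul (Set.finite_of_encard_le_coe hTt) fun e _ ↦ hrec e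
  have hcover : ∀ A ∈ simpleCuts G x t (c + 1), A = S ∨ A ∈ R := by
    intro A hA
    refine (hdich A hA.1 hA.2.1.preconnected hA.2.2.1).imp_right ?_
    rintro ⟨e, heT, he⟩
    exact Set.mem_biUnion heT (mem_simpleCuts_deleteEdges_singleton hA he)
  by_cases hS : S ∈ simpleCuts G x t (c + 1)
  · have hTt' : T.encard + 1 ≤ t := hTS.trans hS.2.2.1
    have ht : (1 : ℕ∞) ≤ t := le_add_self.trans hTt'
    calc (simpleCuts G x t (c + 1)).encard ≤ (insert S R).encard := Set.encard_le_encard hcover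
      _ ≤ R.encard + 1 := Set.encard_insert_le R S
      _ ≤ T.encard * t ^ c + t ^ c := by gcongr; exact one_le_pow₀ ht
      _ = (T.encard + 1) * t ^ c := by ring
      _ ≤ t * t ^ c := by gcongr
      _ = t ^ (c + 1) := (pow_succ' _ _).symm
  · have hsub : simpleCuts G x t (c + 1) ⊆ R := fun A hA ↦
      (hcover A hA).resolve_left fun h ↦ hS (h ▸ hA)
    calc (simpleCuts G x t (c + 1)).encard ≤ R.encard := Set.encard_le_encard hsub
      _ ≤ T.encard * t ^ c := hR
      _ ≤ t * t ^ c := by gcongr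
      _ = t ^ (c + 1) := (pow_succ' _ _).symm

end Counting

theorem statement_15_general {V : Type*} (G : SimpleGraph V) (x : V) (t c : ℕ) :
    (simpleCuts G x t c).encard ≤ t ^ c := by
  induction c generalizing G with
  | zero => simpa using encard_simpleCuts_zero_le G x t
  | succ c ih => exact encard_simpleCuts_succ_le fun e ↦ ih (G.deleteEdges {e})

/-- For a connected graph `G`, positive integers `t` and `c`, and a vertex `x`, the number
of simple `(t, c)`-cuts `(V', V'ᶜ)` with `x ∈ V'` is at most `t ^ c`. -/
theorem statement_15 {V : Type*} [Fintype V] [DecidableEq V]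
    (G : SimpleGraph V) (hG : G.Connected) (t c : ℕ) (ht : 0 < t) (hc : 0 < c) (x : V) :
    {A : Set V | x ∈ A ∧ (G.induce A).Connected ∧ A.ncard ≤ t ∧
      (ecut G A).ncard ≤ c}.ncard ≤ t ^ c := by
  have h := statement_15_general G x t c
  simpa only [simpleCuts, ← Set.coe_ncard_eq_encard, ← Nat.cast_pow, Nat.cast_le] using h
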